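/- arXiv:math/0702809 — 2 statements merged into one kernel-verified Lean document; each statement's English description precedes it below -/
import Mathlib

section
/- For n ≥ 5, every n-dimensional complex filiform Zinbiel algebra is isomorphic to one of the three algebras F_n^1, F_n^2, F_n^3. -/
/-- A bilinear multiplication `mul` is a *Zinbiel* multiplication if it satisfies
`(x∘y)∘z = x∘(y∘z) + x∘(z∘y)`. -/
def IsZinbiel {K A : Type*} [CommRing K] [AddCommGroup A] [Module K A]
    (mul : A →ₗ[K] A →ₗ[K] A) : Prop :=
  ∀ x y z : A, mul (mul x y) z = mul x (mul y z) + mul x (mul z y)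

/-- The descending series of a (Zinbiel) algebra: `zpow mul i` is `A^i`,
with `A^1 = A` and `A^{k+1} = A ∘ A^k` (we also set `A^0 = A` for convenience). -/
def zpow {K A : Type*} [CommRing K] [AddCommGroup A] [Module K A]
    (mul : A →ₗ[K] A →ₗ[K] A) : ℕ → Submodule K A
  | 0 => ⊤
  | 1 => ⊤
  | (k+2) => Submodule.span K {z | ∃ a : A, ∃ b ∈ zpow mul (k+1), z = mul a b}

/-- The bilinear multiplication on `Fin n → ℂ` determined by structure constants `c`:
`e_i ∘ e_j = ∑ k, c i j k • e_k`. -/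
noncomputable def mulOf (n : ℕ) (c : Fin n → Fin n → Fin n → ℂ) :
    (Fin n → ℂ) →ₗ[ℂ] (Fin n → ℂ) →ₗ[ℂ] (Fin n → ℂ) :=
  LinearMap.mk₂ ℂ (fun x y k => ∑ i, ∑ j, x i * y j * c i j k)
    (fun x x' y => by
      funext k
      simp [add_mul, Finset.sum_add_distrib])
    (fun a x y => by
      funext k
      simp [Finset.mul_sum, mul_assoc])
    (fun x y y' => by
      funext k
      simp [mul_add, add_mul, Finset.sum_add_distrib])
    (fun a x y => by
      funext k
      simp [Finset.mul_sum, mul_assoc, mul_left_comm])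

/-- Two bilinear multiplications give isomorphic algebras if there is a linear
equivalence intertwining them. -/
def Isom {A B : Type*} [AddCommGroup A] [Module ℂ A] [AddCommGroup B] [Module ℂ B]
    (mulA : A →ₗ[ℂ] A →ₗ[ℂ] A) (mulB : B →ₗ[ℂ] B →ₗ[ℂ] B) : Prop :=
  ∃ f : A ≃ₗ[ℂ] B, ∀ x y : A, f (mulA x y) = mulB (f x) (f y)

/-- Structure constants of the nul-filiform algebra `NF_n`:
`e_i ∘ e_j = C(i+j-1, j) e_{i+j}` for `2 ≤ i+j ≤ n` (1-indexed). -/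
noncomputable def NFc (n : ℕ) : Fin n → Fin n → Fin n → ℂ := fun i j k =>
  if (i : ℕ) + j + 1 = (k : ℕ) then (((i : ℕ) + j + 1).choose ((j : ℕ) + 1) : ℂ) else 0

/-- The nul-filiform Zinbiel algebra `NF_n` (as a multiplication on `Fin n → ℂ`). -/
noncomputable def NFmul (n : ℕ) : (Fin n → ℂ) →ₗ[ℂ] (Fin n → ℂ) →ₗ[ℂ] (Fin n → ℂ) :=
  mulOf n (NFc n)

/-- Structure constants of the filiform algebra `F_n = F_n^1`:
`e_i ∘ e_j = C(i+j-1, j) e_{i+j}` for `2 ≤ i+j ≤ n-1` (1-indexed), other products zero. -/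
noncomputable def F1c (n : ℕ) : Fin n → Fin n → Fin n → ℂ := fun i j k =>
  if (i : ℕ) + j + 1 = (k : ℕ) ∧ (k : ℕ) + 1 ≤ n - 1 then
    (((i : ℕ) + j + 1).choose ((j : ℕ) + 1) : ℂ) else 0

/-- Structure constants of `F_n^2`: those of `F_n^1` together with `e_n ∘ e_1 = e_{n-1}`. -/
noncomputable def F2c (n : ℕ) : Fin n → Fin n → Fin n → ℂ := fun i j k =>
  F1c n i j k + (if (i : ℕ) = n - 1 ∧ (j : ℕ) = 0 ∧ (k : ℕ) = n - 2 then 1 else 0)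

/-- Structure constants of `F_n^3`: those of `F_n^1` together with `e_n ∘ e_n = e_{n-1}`. -/
noncomputable def F3c (n : ℕ) : Fin n → Fin n → Fin n → ℂ := fun i j k =>
  F1c n i j k + (if (i : ℕ) = n - 1 ∧ (j : ℕ) = n - 1 ∧ (k : ℕ) = n - 2 then 1 else 0)

section Zin
variable {A : Type*} [AddCommGroup A] [Module ℂ A] {mul : A →ₗ[ℂ] A →ₗ[ℂ] A}

lemma zp_one (x : A) : x ∈ zpow mul 1 := by simp [zpow]

lemma zp_mul1 (k : ℕ) (a b : A) (hb : b ∈ zpow mul (k+1)) : mul a b ∈ zpow mul (k+2) := by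
  rw [zpow]; exact Submodule.subset_span ⟨a, b, hb, rfl⟩

lemma zp_ind (k : ℕ) (S : Submodule ℂ A)
    (h : ∀ a : A, ∀ b ∈ zpow mul (k+1), mul a b ∈ S) : zpow mul (k+2) ≤ S := by
  rw [zpow, Submodule.span_le]
  rintro z ⟨a, b, hb, rfl⟩
  exact h a b hb

lemma zp_anti1 (k : ℕ) : zpow mul (k+2) ≤ zpow mul (k+1) := by
  induction k with
  | zero => intro x _; exact zp_one x
  | succ k ih => exact zp_ind _ _ fun a b hb => zp_mul1 _ _ _ (ih hb)

lemma zp_anti {i j : ℕ} (h : i ≤ j) : zpow mul (j+1) ≤ zpow mul (i+1) := by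
  induction h with
  | refl => exact le_rfl
  | step _ ih => exact (zp_anti1 _).trans ih

lemma zp_mul (hz : IsZinbiel mul) : ∀ s i j : ℕ, i + j = s → ∀ x ∈ zpow mul (i+1),
    ∀ y ∈ zpow mul (j+1), mul x y ∈ zpow mul (i+j+2) := by
  intro s
  induction s using Nat.strong_induction_on with
  | _ s ih =>
    intro i j hs x hx y hy
    cases i with
    | zero => simpa [add_comm] using zp_mul1 j x y hy
    | succ i =>
      have : zpow mul (i+2) ≤ (zpow mul (i+1+j+2)).comap (mul.flip y) := by
        apply zp_ind
        intro a b hb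
        simp only [Submodule.mem_comap, LinearMap.flip_apply]
        rw [hz a b y]
        have e : i + 1 + j + 2 = (i + j + 1) + 2 := by ring
        rw [e]
        refine add_mem (zp_mul1 _ _ _ ?_) (zp_mul1 _ _ _ ?_)
        · exact ih (i+j) (by omega) i j rfl b hb y hy
        · have := ih (j+i) (by omega) j i rfl y hy b hb
          rwa [add_comm j i] at this
      exact this hx

lemma zp_mul' (hz : IsZinbiel mul) {i j k : ℕ} {x y : A} (hx : x ∈ zpow mul i)
    (hy : y ∈ zpow mul j) (h : k = i + j) (hi : 1 ≤ i) (hj : 1 ≤ j) : mul x y ∈ zpow mul k := by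
  obtain ⟨i, rfl⟩ := Nat.exists_eq_add_of_le' hi
  obtain ⟨j, rfl⟩ := Nat.exists_eq_add_of_le' hj
  have := zp_mul hz _ i j rfl x hx y hy
  rw [h]; convert this using 2; ring

/-- powers -/
def pq (mul : A →ₗ[ℂ] A →ₗ[ℂ] A) (a : A) : ℕ → A
  | 0 => a
  | k+1 => mul a (pq mul a k)

lemma pq_mem (a : A) (k : ℕ) : pq mul a k ∈ zpow mul (k+1) := by
  induction k with
  | zero => exact zp_one _
  | succ k ih => exact zp_mul1 _ _ _ ih

lemma pq_mul (hz : IsZinbiel mul) (a : A) (i j : ℕ) :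
    mul (pq mul a i) (pq mul a j) = ((i+j+1).choose (j+1) : ℂ) • pq mul a (i+j+1) := by
  have key : ∀ s i j : ℕ, i + j = s → mul (pq mul a i) (pq mul a j)
      = ((i+j+1).choose (j+1) : ℂ) • pq mul a (i+j+1) := by
    intro s
    induction s using Nat.strong_induction_on with
    | _ s ih =>
      intro i j hs
      cases i with
      | zero => simp [pq]
      | succ i =>
        have h1 := ih (i+j) (by omega) i j rfl
        have h2 := ih (j+i) (by omega) j i rfl
        rw [show mul (pq mul a (i+1)) (pq mul a j) = mul (mul a (pq mul a i)) (pq mul a j) from rfl,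
          hz, h1, h2]
        rw [add_comm j i, map_smul, map_smul, ← add_smul]
        rw [show i + 1 + j + 1 = (i+j+1)+1 by ring]
        rw [show mul a (pq mul a (i+j+1)) = pq mul a (i+j+1+1) from rfl]
        congr 1
        rw [Nat.choose_succ_succ (i+j+1) j, Nat.choose_symm_of_eq_add (show i+j+1 = (i+1) + j by ring)]
        push_cast; ring
  exact key _ i j rfl

lemma sub_top (hz : IsZinbiel mul) (S : Submodule ℂ A) (hS : ∀ x ∈ S, ∀ y ∈ S, mul x y ∈ S)
    (h2 : S ⊔ zpow mul 2 = ⊤) (n : ℕ) (hn : zpow mul (n+1) = ⊥) : S = ⊤ := by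
  have h : ∀ k, zpow mul (k+1) ≤ S ⊔ zpow mul (k+2) := by
    intro k
    induction k with
    | zero => simp [h2]
    | succ k ih =>
      apply zp_ind
      intro x y hy
      have hx : x ∈ S ⊔ zpow mul 2 := by rw [h2]; trivial
      obtain ⟨s, hs, x', hx', rfl⟩ := Submodule.mem_sup.1 hx
      obtain ⟨t, ht, y', hy', rfl⟩ := Submodule.mem_sup.1 (ih hy)
      have e : mul (s + x') (t + y') = mul s t + (mul s y' + mul x' (t + y')) := by
        simp; abel
      rw [e]
      exact Submodule.add_mem_sup (hS s hs t ht)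
        (add_mem (zp_mul1 _ _ _ hy') (zp_mul' hz hx' hy (by ring) (by omega) (by omega)))
  have h' : ∀ k, S ⊔ zpow mul (k+1) = ⊤ := by
    intro k
    induction k with
    | zero => simp [zpow]
    | succ k ih => 
      rw [eq_top_iff, ← ih]
      exact sup_le le_sup_left (h k)
  have := h' n
  rwa [hn, sup_bot_eq] at this

lemma pq_f (hz : IsZinbiel mul) (m : ℕ) (h0 : zpow mul (m+5) = ⊥) (a f : A) (α : ℂ)
    (h2 : mul f a = α • pq mul a (m+3)) (k : ℕ) :
    mul f (pq mul a (k+1)) = 0 := by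
  have h := hz f a (pq mul a k)
  have e := pq_mul hz a k 0
  simp only [pq] at e
  rw [e, h2, map_smul, LinearMap.smul_apply, pq_mul hz a (m+3) k,
    show mul a (pq mul a k) = pq mul a (k+1) from rfl] at h
  have z : pq mul a (m+3+k+1) = 0 := by
    have h1 : pq mul a (m+3+k+1) ∈ zpow mul (m+3+k+1+1) := pq_mem a _
    have := zp_anti (mul := mul) (show m+4 ≤ m+3+k+1 by omega) h1
    rw [h0] at this; simpa using this
  rw [z, smul_zero, smul_zero, map_smul] at h
  nth_rewrite 1 [← one_smul ℂ (mul f (pq mul a (k+1)))] at h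
  rw [show k+0+1 = k+1 by ring, ← add_smul] at h
  rcases smul_eq_zero.1 h.symm with h | h
  · exfalso
    have : ((1 + (k+1).choose (0+1) : ℕ) : ℂ) = 0 := by push_cast; exact_mod_cast h
    rw [Nat.cast_eq_zero] at this; omega
  · exact h

lemma f_pq (hz : IsZinbiel mul) (m : ℕ) (h0 : zpow mul (m+5) = ⊥) (a f : A) (α : ℂ)
    (h1 : mul a f = 0) (h2 : mul f a = α • pq mul a (m+3)) (k : ℕ) :
    mul (pq mul a k) f = 0 := by
  induction k with
  | zero => exact h1
  | succ k ih =>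
    rw [show mul (pq mul a (k+1)) f = mul (mul a (pq mul a k)) f from rfl, hz, ih, map_zero, zero_add]
    cases k with
    | zero =>
      rw [pq, h2, map_smul]
      have : mul a (pq mul a (m+3)) ∈ zpow mul (m+5) := pq_mem a (m+4)
      rw [h0] at this
      rw [(Submodule.mem_bot _).1 this, smul_zero]
    | succ k => rw [pq_f hz m h0 a f α h2 k, map_zero]

end Zin

noncomputable def Fab (n : ℕ) (α β : ℂ) : Fin n → Fin n → Fin n → ℂ := fun i j k =>
  F1c n i j k + ((if (i : ℕ) = n - 1 ∧ (j : ℕ) = 0 ∧ (k : ℕ) = n - 2 then α else 0)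
   + (if (i : ℕ) = n - 1 ∧ (j : ℕ) = n - 1 ∧ (k : ℕ) = n - 2 then β else 0))

lemma F1_eq (n : ℕ) : F1c n = Fab n 0 0 := by funext i j k; simp [Fab]
lemma F2_eq (n : ℕ) : F2c n = Fab n 1 0 := by funext i j k; simp [Fab, F2c]
lemma F3_eq (n : ℕ) : F3c n = Fab n 0 1 := by funext i j k; simp [Fab, F3c]

lemma isom_of {A : Type*} [AddCommGroup A] [Module ℂ A] [FiniteDimensional ℂ A]
    (mul : A →ₗ[ℂ] A →ₗ[ℂ] A) (n : ℕ) (hdim : Module.finrank ℂ A = n)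
    (c : Fin n → Fin n → Fin n → ℂ) (e : Fin n → A)
    (he : ⊤ ≤ Submodule.span ℂ (Set.range e))
    (hm : ∀ i j, mul (e i) (e j) = ∑ k, c i j k • e k) : Isom mul (mulOf n c) := by
  let b : Module.Basis (Fin n) ℂ A := basisOfTopLeSpanOfCardEqFinrank e he (by simp [hdim])
  have hb : ∀ i, b i = e i := fun i => by simp [b]
  refine ⟨b.equivFun, fun x y => ?_⟩
  have key : mul.compr₂ b.equivFun.toLinearMap
      = (mulOf n c).compl₁₂ b.equivFun.toLinearMap b.equivFun.toLinearMap := by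
    refine LinearMap.ext_basis b b fun i j => ?_
    simp only [LinearMap.compr₂_apply, LinearMap.compl₁₂_apply, LinearEquiv.coe_coe]
    rw [hb i, hb j, hm i j, ← hb i, ← hb j]
    funext k
    rw [map_sum]
    simp only [map_smul, ← hb, Module.Basis.equivFun_self, mulOf, LinearMap.mk₂_apply, Finset.sum_apply,
      Pi.smul_apply]
    simp [Pi.single_apply]
  exact LinearMap.congr_fun₂ key x y

lemma nf_isom {A : Type*} [AddCommGroup A] [Module ℂ A] [FiniteDimensional ℂ A]
    {mul : A →ₗ[ℂ] A →ₗ[ℂ] A} (hz : IsZinbiel mul) (m : ℕ) (h0 : zpow mul (m+5) = ⊥)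
    (hdim : Module.finrank ℂ A = m+5) (a f : A) (α β : ℂ)
    (hs : Submodule.span ℂ {a, f} ⊔ zpow mul 2 = ⊤)
    (h1 : mul a f = 0) (h2 : mul f a = α • pq mul a (m+3)) (h3 : mul f f = β • pq mul a (m+3)) :
    Isom mul (mulOf (m+5) (Fab (m+5) α β)) := by
  let e : Fin (m+5) → A := fun i => if (i:ℕ) < m+4 then pq mul a i else f
  have hz0 : ∀ k, m+4 ≤ k → pq mul a k = 0 := by
    intro k hk
    have := zp_anti (mul := mul) hk (pq_mem a k)
    rw [h0] at this; simpa using this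
  have hm : ∀ i j, mul (e i) (e j) = ∑ k, Fab (m+5) α β i j k • e k := by
    intro i j
    have hsum : ∀ (k0 : ℕ) (hk : k0 < m+5) (g : Fin (m+5) → ℂ), (∀ k : Fin (m+5), (k:ℕ) ≠ k0 → g k = 0) →
        ∑ k, g k • e k = g ⟨k0, hk⟩ • e ⟨k0, hk⟩ := by
      intro k0 hk g hg
      rw [Finset.sum_eq_single (⟨k0, hk⟩ : Fin (m+5))]
      · intro k _ hne
        rw [hg k (fun h => hne (Fin.ext h)), zero_smul]
      · simp
    have hi := i.2
    have hj := j.2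
    by_cases ci : (i:ℕ) < m+4
    · by_cases cj : (j:ℕ) < m+4
      · simp only [e, ci, cj, if_true]
        rw [pq_mul hz]
        by_cases cij : (i:ℕ) + j + 1 < m + 4
        · rw [hsum (i+j+1) (by omega)]
          · have : ¬ ((i:ℕ) = m + 4) := by omega
            simp [e, Fab, F1c, cij, this]
            omega
          · intro k hk
            have : ¬ ((i:ℕ) = m + 4) := by omega
            have h' : ¬ ((i:ℕ) + j + 1 = k) := by omega
            simp [Fab, F1c, this, h']
        · rw [hz0 _ (by omega), smul_zero]
          symm
          apply Finset.sum_eq_zero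
          intro k _
          have : ¬ ((i:ℕ) = m + 4) := by omega
          have h' : ¬ ((i:ℕ) + j + 1 = k ∧ (k:ℕ) + 1 ≤ m+5-1) := by omega
          have : Fab (m+5) α β i j k = 0 := by
            simp only [Fab, F1c, if_neg h']
            simp [this]
          rw [this, zero_smul]
      · simp only [e, ci, cj, if_true, if_false]
        rw [f_pq hz m h0 a f α h1 h2]
        symm
        apply Finset.sum_eq_zero
        intro k _
        have : ¬ ((i:ℕ) = m + 4) := by omega
        have h' : ¬ ((i:ℕ) + j + 1 = k ∧ (k:ℕ) + 1 ≤ m+5-1) := by omega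
        have : Fab (m+5) α β i j k = 0 := by
          simp only [Fab, F1c, if_neg h']
          simp [this]
        rw [this, zero_smul]
    · have ci' : (i:ℕ) = m+4 := by omega
      have hF : ∀ k, F1c (m+5) i j k = 0 := by
        intro k
        simp [F1c]
        intro h h2
        omega
      by_cases cj : (j:ℕ) < m+4
      · have cj' : ¬ ((j:ℕ) = m+4) := by omega
        simp only [e, ci, cj, if_true, if_false]
        by_cases j0 : (j:ℕ) = 0
        · rw [j0, pq, h2, hsum (m+3) (by omega)]
          · simp [e, Fab, hF, ci', j0]
          · intro k hk
            simp [Fab, hF, cj', hk]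
        · obtain ⟨j', hj'⟩ := Nat.exists_eq_succ_of_ne_zero j0
          rw [hj', Nat.succ_eq_add_one, pq_f hz m h0 a f α h2]
          symm
          apply Finset.sum_eq_zero
          intro k _
          simp [Fab, hF, cj', j0]
      · have cj' : (j:ℕ) = m+4 := by omega
        simp only [e, ci, cj, if_false]
        rw [h3, hsum (m+3) (by omega)]
        · simp [e, Fab, hF, ci', cj']
        · intro k hk
          simp [Fab, hF, cj', hk]
  refine isom_of mul (m+5) hdim _ e ?_ hm
  refine (sub_top hz _ ?_ ?_ (m+4) h0).ge
  · intro x hx y hy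
    induction hx using Submodule.span_induction with
    | mem x hx =>
      obtain ⟨i, rfl⟩ := hx
      induction hy using Submodule.span_induction with
      | mem y hy =>
        obtain ⟨j, rfl⟩ := hy
        rw [hm]
        exact sum_mem fun k _ => Submodule.smul_mem _ _ (Submodule.subset_span ⟨k, rfl⟩)
      | zero => simp
      | add y y' _ _ h h' => rw [map_add]; exact add_mem h h'
      | smul c y _ h => rw [map_smul]; exact Submodule.smul_mem _ _ h
    | zero => simp
    | add y y' _ _ h h' => rw [map_add]; exact add_mem h h'
    | smul c y _ h => rw [map_smul]; exact Submodule.smul_mem _ _ h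
  · rw [eq_top_iff, ← hs]
    refine sup_le_sup_right (Submodule.span_mono ?_) _
    rintro x (rfl | rfl)
    · exact ⟨⟨0, by omega⟩, by simp [e, pq]⟩
    · exact ⟨⟨m+4, by omega⟩, by simp [e]⟩

lemma span_change {A : Type*} [AddCommGroup A] [Module ℂ A] (P : Submodule ℂ A) (a f a' f' : A)
    (hs : Submodule.span ℂ {a, f} ⊔ P = ⊤)
    (ha : a ∈ Submodule.span ℂ {a', f'} ⊔ P) (hf : f ∈ Submodule.span ℂ {a', f'} ⊔ P) :
    Submodule.span ℂ {a', f'} ⊔ P = ⊤ := by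
  rw [eq_top_iff, ← hs]
  refine sup_le (Submodule.span_le.2 ?_) le_sup_right
  rintro x (rfl | rfl) <;> assumption

lemma mem_spair {A : Type*} [AddCommGroup A] [Module ℂ A] (P : Submodule ℂ A) (a f w : A) (x y : ℂ)
    (hw : w ∈ P) : x • a + y • f + w ∈ Submodule.span ℂ {a, f} ⊔ P :=
  Submodule.add_mem_sup (Submodule.mem_span_pair.2 ⟨x, y, rfl⟩) hw

lemma nf_final {A : Type*} [AddCommGroup A] [Module ℂ A] [FiniteDimensional ℂ A]
    {mul : A →ₗ[ℂ] A →ₗ[ℂ] A} (hz : IsZinbiel mul) (m : ℕ) (h0 : zpow mul (m+5) = ⊥)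
    (hdim : Module.finrank ℂ A = m+5) (a f : A) (α β : ℂ)
    (hs : Submodule.span ℂ {a, f} ⊔ zpow mul 2 = ⊤)
    (h1 : mul a f = 0) (h2 : mul f a = α • pq mul a (m+3)) (h3 : mul f f = β • pq mul a (m+3)) :
    Isom mul (mulOf (m+5) (F1c (m+5))) ∨ Isom mul (mulOf (m+5) (F2c (m+5))) ∨
      Isom mul (mulOf (m+5) (F3c (m+5))) := by
  rw [F1_eq, F2_eq, F3_eq]
  have sc : ∀ c : ℂ, c ≠ 0 → Submodule.span ℂ {a, c • f} ⊔ zpow mul 2 = ⊤ := by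
    intro c hc
    refine span_change _ a f _ _ hs ?_ ?_
    · simpa using mem_spair (zpow mul 2) a (c • f) 0 1 0 (zero_mem _)
    · simpa [hc] using mem_spair (zpow mul 2) a (c • f) 0 0 c⁻¹ (zero_mem _)
  by_cases hβ : β = 0
  · by_cases hα : α = 0
    · left
      subst hα hβ
      exact nf_isom hz m h0 hdim a f 0 0 hs h1 h2 h3
    · right; left
      refine nf_isom hz m h0 hdim a (α⁻¹ • f) 1 0 (sc _ (inv_ne_zero hα)) ?_ ?_ ?_
      · simp [h1]
      · simp [h2, hα]
      · simp [h3, hβ]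
  · right; right
    obtain ⟨r, hr⟩ := IsAlgClosed.exists_pow_nat_eq β (n := 2) (by norm_num)
    have hr0 : r ≠ 0 := by rintro rfl; simp at hr; exact hβ hr.symm
    have hm0 : ((m:ℂ) + 2) ≠ 0 := by exact_mod_cast (show m + 2 ≠ 0 by omega)
    obtain ⟨t, ht⟩ : ∃ t : ℂ, α = t * β * (m + 2) := ⟨α / (β * (m+2)), by field_simp⟩
    have fp := pq_f hz m h0 a f α h2
    have pf := f_pq hz m h0 a f α h1 h2
    have hz0 : ∀ k, m+4 ≤ k → pq mul a k = 0 := by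
      intro k hk
      have := zp_anti (mul := mul) hk (pq_mem a k)
      rw [h0] at this; simpa using this
    have e1 : ∀ k, mul a (pq mul a k) = pq mul a (k+1) := fun k => rfl
    set a' := a + t • f with ha'
    set f' := r⁻¹ • (f - (t * β) • pq mul a (m+2)) with hf'
    have p1 : pq mul a' 1 = pq mul a 1 + (t * α + t * t * β) • pq mul a (m+3) := by
      simp only [pq, ha', map_add, map_smul, LinearMap.add_apply, LinearMap.smul_apply, h1, h2, h3]
      module
    have p2 : ∀ k, pq mul a' (k+2) = pq mul a (k+2) := by
      intro k
      induction k with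
      | zero =>
        rw [show pq mul a' (0+2) = mul a' (pq mul a' 1) from rfl, p1, ha']
        simp only [map_add, map_smul, LinearMap.add_apply, LinearMap.smul_apply, fp, e1]
        rw [hz0 (m+3+1) (by omega)]
        simp
      | succ k ih =>
        rw [show pq mul a' (k+1+2) = mul a' (pq mul a' (k+2)) from rfl, ih, ha']
        simp only [map_add, map_smul, LinearMap.add_apply, LinearMap.smul_apply, fp, e1]
        simp
    have pa : mul (pq mul a (m+2)) a = ((m:ℂ)+3) • pq mul a (m+3) := by
      have := pq_mul hz a (m+2) 0
      rw [show pq mul a 0 = a from rfl] at this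
      rw [this]
      simp
      congr 1
      ring
    have pp : mul (pq mul a (m+2)) (pq mul a (m+2)) = 0 := by
      rw [pq_mul hz, hz0 _ (by omega), smul_zero]
    refine nf_isom hz m h0 hdim a' f' 0 1 ?_ ?_ ?_ ?_
    · have hp : pq mul a (m+2) ∈ zpow mul 2 := zp_anti (show 1 ≤ m+2 by omega) (pq_mem a (m+2))
      refine span_change _ a f _ _ hs ?_ ?_
      · convert mem_spair (zpow mul 2) a' f' (-((t * (t * β)) • pq mul a (m+2))) 1 (-t * r)
          (neg_mem (Submodule.smul_mem _ _ hp)) using 1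
        rw [ha', hf', smul_smul, mul_assoc, mul_inv_cancel₀ hr0]
        module
      · convert mem_spair (zpow mul 2) a' f' ((t * β) • pq mul a (m+2)) 0 r
          (Submodule.smul_mem _ _ hp) using 1
        rw [hf', smul_smul, mul_inv_cancel₀ hr0]
        module
    · rw [ha', hf']
      simp only [map_add, map_smul, map_sub, LinearMap.add_apply, LinearMap.smul_apply, h1, h3, e1, fp (m+1)]
      rw [show m+2+1 = m+3 by ring]
      module
    · rw [ha', hf']
      simp only [map_add, map_smul, map_sub, LinearMap.add_apply, LinearMap.smul_apply, LinearMap.sub_apply, h2, h3, pa, pf]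
      rw [ht]
      module
    · rw [hf', p2 (m+1)]
      simp only [map_smul, map_sub, LinearMap.smul_apply, LinearMap.sub_apply, h3, pf, fp (m+1), pp]
      rw [← hr]
      simp only [smul_zero, sub_zero, smul_smul]
      congr 1
      field_simp

lemma cov {A : Type*} [AddCommGroup A] [Module ℂ A] [FiniteDimensional ℂ A] (P Q : Submodule ℂ A)
    (hPQ : P ≤ Q) (h : Module.finrank ℂ Q = Module.finrank ℂ P + 1) (u : A) (hu : u ∈ Q)
    (hu' : u ∉ P) (x : A) (hx : x ∈ Q) : ∃ c : ℂ, x - c • u ∈ P := by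
  have : P ⊔ Submodule.span ℂ {u} = Q := by
    apply Submodule.eq_of_le_of_finrank_eq
    · exact sup_le hPQ (by simpa using hu)
    · rw [Submodule.finrank_sup_span_singleton hu', h]
  rw [← this] at hx
  obtain ⟨p, hp, v, hv, rfl⟩ := Submodule.mem_sup.1 hx
  obtain ⟨c, rfl⟩ := Submodule.mem_span_singleton.1 hv
  exact ⟨c, by simpa using hp⟩

lemma two_gen {A : Type*} [AddCommGroup A] [Module ℂ A] [FiniteDimensional ℂ A] (P : Submodule ℂ A)
    (h : Module.finrank ℂ A = Module.finrank ℂ P + 2) (a : A) (ha : a ∉ P) :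
    ∃ d, Submodule.span ℂ {a, d} ⊔ P = ⊤ := by
  have h1 := Submodule.finrank_sup_span_singleton (K := ℂ) ha
  have : ∃ d, d ∉ P ⊔ Submodule.span ℂ {a} := by
    by_contra hc
    push Not at hc
    have : P ⊔ Submodule.span ℂ {a} = ⊤ := by rw [eq_top_iff]; intro x _; exact hc x
    rw [this, finrank_top] at h1
    omega
  obtain ⟨d, hd⟩ := this
  refine ⟨d, ?_⟩
  have h2 := Submodule.finrank_sup_span_singleton (K := ℂ) hd
  have h3 : Submodule.span ℂ {a, d} ⊔ P = P ⊔ Submodule.span ℂ {a} ⊔ Submodule.span ℂ {d} := by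
    rw [Submodule.span_insert]
    rw [sup_comm, sup_assoc]
  rw [h3]
  apply Submodule.eq_top_of_finrank_eq
  omega

lemma decomp {A : Type*} [AddCommGroup A] [Module ℂ A] (P : Submodule ℂ A) (a f : A)
    (hs : Submodule.span ℂ {a, f} ⊔ P = ⊤) (x : A) :
    ∃ s t : ℂ, ∃ w ∈ P, x = s • a + t • f + w := by
  have hx : x ∈ Submodule.span ℂ {a, f} ⊔ P := by rw [hs]; trivial
  obtain ⟨p, hp, w, hw, rfl⟩ := Submodule.mem_sup.1 hx
  obtain ⟨s, t, rfl⟩ := Submodule.mem_span_pair.1 hp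
  exact ⟨s, t, w, hw, rfl⟩

lemma half_mem {A : Type*} [AddCommGroup A] [Module ℂ A] (P : Submodule ℂ A) (x : A)
    (h : x + x ∈ P) : x ∈ P := by
  have := P.smul_mem (1/2 : ℂ) h
  convert this using 1
  module

section S
variable {A : Type*} [AddCommGroup A] [Module ℂ A] [FiniteDimensional ℂ A]
    {mul : A →ₗ[ℂ] A →ₗ[ℂ] A}

lemma not_le_of (m : ℕ) (hfil : ∀ i : ℕ, 2 ≤ i → i ≤ m+5 → Module.finrank ℂ (zpow mul i) = m+5 - i)
    (k : ℕ) (h2 : 2 ≤ k) (hk : k ≤ m+4) : ¬ zpow mul k ≤ zpow mul (k+1) := by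
  intro h
  have := Submodule.finrank_mono h
  rw [hfil k h2 (by omega), hfil (k+1) (by omega) (by omega)] at this
  omega

lemma exists_sq (hz : IsZinbiel mul) (m : ℕ) (hdim : Module.finrank ℂ A = m+5)
    (hfil : ∀ i : ℕ, 2 ≤ i → i ≤ m+5 → Module.finrank ℂ (zpow mul i) = m+5 - i) :
    ∃ a, mul a a ∉ zpow mul 3 := by
  by_contra hc
  push Not at hc
  have sk : ∀ x y, mul x y + mul y x ∈ zpow mul 3 := by
    intro x y
    have := sub_mem (sub_mem (hc (x+y)) (hc x)) (hc y)
    convert this using 1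
    simp; abel
  have hux : ∀ u ∈ zpow mul 2, ∀ x, mul u x ∈ zpow mul 4 := by
    intro u hu x
    have : zpow mul 2 ≤ (zpow mul 4).comap (mul.flip x) := by
      apply zp_ind 0
      intro y z _
      simp only [Submodule.mem_comap, LinearMap.flip_apply]
      rw [hz, ← map_add]
      exact zp_mul1 2 _ _ (sk _ _)
    exact this hu
  -- find b c
  obtain ⟨a, ha⟩ : ∃ a, a ∉ zpow mul 2 := by
    by_contra h
    push Not at h
    have : zpow mul 2 = ⊤ := by rw [eq_top_iff]; intro x _; exact h x
    have h2 := hfil 2 (by omega) (by omega)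
    rw [this, finrank_top] at h2
    omega
  obtain ⟨d, hd⟩ := two_gen (zpow mul 2) (by rw [hdim, hfil 2 (by omega) (by omega)]; omega) a ha
  obtain ⟨u, hu, hu3⟩ := SetLike.not_le_iff_exists.1 (not_le_of m hfil 2 (by omega) (by omega))
  have hgen : ∀ y ∈ zpow mul 2, ∃ c : ℂ, y - c • u ∈ zpow mul 3 :=
    cov (zpow mul 3) (zpow mul 2) (zp_anti1 1)
      (by rw [hfil 2 (by omega) (by omega), hfil 3 (by omega) (by omega)]; omega) u hu hu3
  obtain ⟨b, c, hbc, hb⟩ : ∃ b c, Submodule.span ℂ {b, c} ⊔ zpow mul 2 = ⊤ ∧ mul b u ∈ zpow mul 4 := by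
    by_cases hau : mul a u ∈ zpow mul 4
    · exact ⟨a, d, hd, hau⟩
    · obtain ⟨r, hr⟩ := cov (zpow mul 4) (zpow mul 3) (zp_anti1 2)
        (by rw [hfil 4 (by omega) (by omega), hfil 3 (by omega) (by omega)]; omega)
        (mul a u) (zp_mul1 1 _ _ hu) hau (mul d u) (zp_mul1 1 _ _ hu)
      refine ⟨d - r • a, a, ?_, by simpa using hr⟩
      refine span_change _ a d _ _ hd ?_ ?_
      · convert mem_spair (zpow mul 2) (d - r • a) a 0 0 1 (zero_mem _) using 1
        module
      · convert mem_spair (zpow mul 2) (d - r • a) a 0 1 r (zero_mem _) using 1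
        module
  have hb2 : ∀ y ∈ zpow mul 2, mul b y ∈ zpow mul 4 := by
    intro y hy
    obtain ⟨r, hr⟩ := hgen y hy
    have := add_mem (zp_mul1 2 b _ hr) (Submodule.smul_mem _ r hb)
    simpa using this
  have hb3 : ∀ y ∈ zpow mul 3, mul b y ∈ zpow mul 5 := by
    intro y hy
    have : zpow mul 3 ≤ (zpow mul 5).comap (mul b) := by
      apply zp_ind 1
      intro x y hy
      simp only [Submodule.mem_comap]
      have h1 : mul (mul b y) x ∈ zpow mul 5 :=
        zp_mul' hz (hb2 y hy) (zp_one x) rfl (by omega) (by omega)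
      rw [hz] at h1
      exact ((Submodule.add_mem_iff_right _ (zp_mul1 3 b _ (hux y hy x))).1 h1)
    exact this hy
  have hcccb : mul c (mul c (mul c b)) ∈ zpow mul 5 := by
    have h1 : mul (mul c c) (mul c b) ∈ zpow mul 5 :=
      zp_mul' hz (hc c) (zp_mul1 0 c b (zp_one b)) rfl (by omega) (by omega)
    rw [hz] at h1
    exact (Submodule.add_mem_iff_left _ (zp_mul1 3 c _ (hux _ (zp_mul1 0 c b (zp_one b)) c))).1 h1
  have g2 : zpow mul 2 ≤ Submodule.span ℂ {mul c b} ⊔ zpow mul 3 := by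
    apply zp_ind 0
    intro x y _
    obtain ⟨s, t, w, hw, rfl⟩ := decomp _ b c hbc x
    obtain ⟨s', t', w', hw', rfl⟩ := decomp _ b c hbc y
    have e : mul (s • b + t • c + w) (s' • b + t' • c + w') =
      (t * s' - s * t') • mul c b + ((s * s') • mul b b + (t * t') • mul c c
        + (s * t') • (mul b c + mul c b)
        + mul w (s' • b + t' • c + w') + mul (s • b + t • c) w') := by
      simp only [map_add, map_smul, LinearMap.add_apply, LinearMap.smul_apply]
      module
    rw [e]
    refine Submodule.add_mem_sup (Submodule.smul_mem _ _ (Submodule.mem_span_singleton_self _)) ?_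
    refine add_mem (add_mem (add_mem (add_mem ?_ ?_) ?_) ?_) ?_
    · exact Submodule.smul_mem _ _ (hc b)
    · exact Submodule.smul_mem _ _ (hc c)
    · exact Submodule.smul_mem _ _ (sk _ _)
    · exact zp_mul' hz hw (zp_one _) rfl (by omega) (by omega)
    · exact zp_mul1 1 _ _ hw'
  have g3 : zpow mul 3 ≤ Submodule.span ℂ {mul c (mul c b)} ⊔ zpow mul 4 := by
    apply zp_ind 1
    intro x y hy
    obtain ⟨s, t, w, hw, rfl⟩ := decomp _ b c hbc x
    obtain ⟨p, hp, y', hy', rfl⟩ := Submodule.mem_sup.1 (g2 hy)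
    obtain ⟨r, rfl⟩ := Submodule.mem_span_singleton.1 hp
    have e : mul (s • b + t • c + w) (r • mul c b + y') =
      (t * r) • mul c (mul c b) + (s • mul b (r • mul c b + y') + mul w (r • mul c b + y')
        + t • mul c y') := by
      simp only [map_add, map_smul, LinearMap.add_apply, LinearMap.smul_apply]
      module
    rw [e]
    refine Submodule.add_mem_sup (Submodule.smul_mem _ _ (Submodule.mem_span_singleton_self _)) ?_
    refine add_mem (add_mem ?_ ?_) ?_
    · exact Submodule.smul_mem _ _ (hb2 _ hy)
    · exact zp_mul' hz hw hy rfl (by omega) (by omega)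
    · exact Submodule.smul_mem _ _ (zp_mul1 2 _ _ hy')
  refine not_le_of m hfil 4 (by omega) (by omega) ?_
  apply zp_ind 2
  intro x y hy
  obtain ⟨s, t, w, hw, rfl⟩ := decomp _ b c hbc x
  obtain ⟨p, hp, y', hy', rfl⟩ := Submodule.mem_sup.1 (g3 hy)
  obtain ⟨r, rfl⟩ := Submodule.mem_span_singleton.1 hp
  have e : mul (s • b + t • c + w) (r • mul c (mul c b) + y') =
      (t * r) • mul c (mul c (mul c b)) + (s • mul b (r • mul c (mul c b) + y')
        + mul w (r • mul c (mul c b) + y') + t • mul c y') := by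
    simp only [map_add, map_smul, LinearMap.add_apply, LinearMap.smul_apply]
    module
  rw [e]
  refine add_mem (Submodule.smul_mem _ _ hcccb) (add_mem (add_mem ?_ ?_) ?_)
  · exact Submodule.smul_mem _ _ (hb3 _ hy)
  · exact zp_mul' hz hw hy rfl (by omega) (by omega)
  · exact Submodule.smul_mem _ _ (zp_mul1 3 _ _ hy')

lemma good (hz : IsZinbiel mul) (m : ℕ)
    (hfil : ∀ i : ℕ, 2 ≤ i → i ≤ m+5 → Module.finrank ℂ (zpow mul i) = m+5 - i)
    (a f : A) (haa : mul a a ∉ zpow mul 3) (hs : Submodule.span ℂ {a, f} ⊔ zpow mul 2 = ⊤)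
    (haf : mul a f ∈ zpow mul 3) : mul f a ∈ zpow mul 3 ∧ mul f f ∈ zpow mul 3 := by
  have m2 : ∀ x y, mul x y ∈ zpow mul 2 := fun x y => zp_mul1 0 x y (zp_one y)
  have hgen : ∀ y ∈ zpow mul 2, ∃ c : ℂ, y - c • mul a a ∈ zpow mul 3 :=
    cov (zpow mul 3) (zpow mul 2) (zp_anti1 1)
      (by rw [hfil 2 (by omega) (by omega), hfil 3 (by omega) (by omega)]; omega) _ (m2 a a) haa
  obtain ⟨μ, hμ⟩ := hgen _ (m2 f a)
  obtain ⟨ν, hν⟩ := hgen _ (m2 f f)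
  have r1 : mul f (mul a a) - μ • mul a (mul a a) ∈ zpow mul 4 := by
    apply half_mem
    have := zp_mul' hz hμ (zp_one a) rfl (by omega) (by omega)
    convert this using 1
    simp only [map_sub, map_smul, LinearMap.sub_apply, LinearMap.smul_apply, hz _ _ a]
    module
  have r2 : mul a (mul a a) ∉ zpow mul 4 := by
    intro h
    refine not_le_of m hfil 3 (by omega) (by omega) ?_
    apply zp_ind 1
    intro x y hy
    obtain ⟨s, t, w, hw, rfl⟩ := decomp _ a f hs x
    obtain ⟨c, hc⟩ := hgen y hy
    have e : mul (s • a + t • f + w) y = (c * s + c * t * μ) • mul a (mul a a)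
       + (c * t) • (mul f (mul a a) - μ • mul a (mul a a))
       + c • mul w (mul a a) + mul (s • a + t • f + w) (y - c • mul a a) := by
      simp only [map_add, map_sub, map_smul, LinearMap.add_apply, LinearMap.smul_apply]
      module
    rw [e]
    refine add_mem (add_mem (add_mem ?_ ?_) ?_) ?_
    · exact Submodule.smul_mem _ _ h
    · exact Submodule.smul_mem _ _ r1
    · exact Submodule.smul_mem _ _ (zp_mul' hz hw (m2 a a) rfl (by omega) (by omega))
    · exact zp_mul1 2 _ _ hc
  have r3 : ∀ c : ℂ, c • mul a (mul a a) ∈ zpow mul 4 → c = 0 := by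
    intro c hc
    by_contra h
    exact r2 ((Submodule.smul_mem_iff _ h).1 hc)
  have hμ0 : μ = 0 := by
    apply r3
    have h1 : mul (mul a f) a ∈ zpow mul 4 := zp_mul' hz haf (zp_one a) rfl (by omega) (by omega)
    rw [hz] at h1
    have h2 := sub_mem (sub_mem h1 (zp_mul1 2 a _ haf)) (zp_mul1 2 a _ hμ)
    convert h2 using 1
    simp only [map_sub, map_smul]
    module
  have hν0 : ν = 0 := by
    apply r3
    have h1 : mul (mul a f) f ∈ zpow mul 4 := zp_mul' hz haf (zp_one f) rfl (by omega) (by omega)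
    rw [hz] at h1
    have h2 := sub_mem (half_mem _ _ h1) (zp_mul1 2 a _ hν)
    convert h2 using 1
    simp only [map_sub, map_smul]
    module
  subst hμ0 hν0
  exact ⟨by simpa using hμ, by simpa using hν⟩

lemma gens (hz : IsZinbiel mul) (m : ℕ)
    (hfil : ∀ i : ℕ, 2 ≤ i → i ≤ m+5 → Module.finrank ℂ (zpow mul i) = m+5 - i)
    (a f : A) (haa : mul a a ∉ zpow mul 3) (hs : Submodule.span ℂ {a, f} ⊔ zpow mul 2 = ⊤)
    (hfa : mul f a ∈ zpow mul 3) (k : ℕ) :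
    zpow mul (k+2) ≤ Submodule.span ℂ {pq mul a (k+1)} ⊔ zpow mul (k+3) := by
  have hf : ∀ k, mul f (pq mul a (k+1)) ∈ zpow mul (k+4) := by
    intro k
    have h1 : mul (mul f a) (pq mul a k) ∈ zpow mul (k+4) :=
      zp_mul' hz hfa (pq_mem a k) (by ring) (by omega) (by omega)
    have e := pq_mul hz a k 0
    rw [show pq mul a 0 = a from rfl] at e
    rw [hz, e, map_smul, show mul a (pq mul a k) = pq mul a (k+1) from rfl] at h1
    nth_rewrite 1 [← one_smul ℂ (mul f (pq mul a (k+1)))] at h1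
    rw [show k+0+1 = k+1 by ring, ← add_smul] at h1
    refine (Submodule.smul_mem_iff _ ?_).1 h1
    rw [zero_add, Nat.choose_one_right]
    exact_mod_cast (show 1 + (k+1) ≠ 0 by omega)
  induction k with
  | zero =>
    intro y hy
    obtain ⟨c, hc⟩ := cov (zpow mul 3) (zpow mul 2) (zp_anti1 1)
      (by rw [hfil 2 (by omega) (by omega), hfil 3 (by omega) (by omega)]; omega) (mul a a)
      (zp_mul1 0 a a (zp_one a)) haa y hy
    rw [show y = c • mul a a + (y - c • mul a a) by module]
    exact Submodule.add_mem_sup (Submodule.smul_mem _ _ (Submodule.mem_span_singleton_self _)) hc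
  | succ k ih =>
    apply zp_ind (k+1)
    intro x y hy
    obtain ⟨s, t, w, hw, rfl⟩ := decomp _ a f hs x
    obtain ⟨p, hp, y', hy', rfl⟩ := Submodule.mem_sup.1 (ih hy)
    obtain ⟨r, rfl⟩ := Submodule.mem_span_singleton.1 hp
    have e : mul (s • a + t • f + w) (r • pq mul a (k+1) + y') =
      (s * r) • pq mul a (k+2) + ((t * r) • mul f (pq mul a (k+1))
        + mul w (r • pq mul a (k+1) + y') + mul (s • a + t • f) y') := by
      rw [show pq mul a (k+2) = mul a (pq mul a (k+1)) from rfl]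
      simp only [map_add, map_smul, LinearMap.add_apply, LinearMap.smul_apply]
      module
    rw [e]
    refine Submodule.add_mem_sup (Submodule.smul_mem _ _ (Submodule.mem_span_singleton_self _)) ?_
    refine add_mem (add_mem ?_ ?_) ?_
    · exact Submodule.smul_mem _ _ (hf k)
    · exact zp_mul' hz hw hy (by ring) (by omega) (by omega)
    · exact zp_mul1 (k+2) _ _ hy'

lemma main5 (hz : IsZinbiel mul) (m : ℕ) (hdim : Module.finrank ℂ A = m+5)
    (hfil : ∀ i : ℕ, 2 ≤ i → i ≤ m+5 → Module.finrank ℂ (zpow mul i) = m+5 - i) :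
    Isom mul (mulOf (m+5) (F1c (m+5))) ∨ Isom mul (mulOf (m+5) (F2c (m+5))) ∨
      Isom mul (mulOf (m+5) (F3c (m+5))) := by
  have h0 : zpow mul (m+5) = ⊥ := by
    apply Submodule.finrank_eq_zero.1
    rw [hfil (m+5) (by omega) le_rfl]; omega
  have m2 : ∀ x y, mul x y ∈ zpow mul 2 := fun x y => zp_mul1 0 x y (zp_one y)
  obtain ⟨a, haa⟩ := exists_sq hz m hdim hfil
  have ha : a ∉ zpow mul 2 := fun h => haa (zp_mul1 1 a a h)
  obtain ⟨d, hd⟩ := two_gen (zpow mul 2) (by rw [hdim, hfil 2 (by omega) (by omega)]; omega) a ha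
  obtain ⟨c, hc⟩ := cov (zpow mul 3) (zpow mul 2) (zp_anti1 1)
      (by rw [hfil 2 (by omega) (by omega), hfil 3 (by omega) (by omega)]; omega) _ (m2 a a) haa
      _ (m2 a d)
  have hs1 : Submodule.span ℂ {a, d - c • a} ⊔ zpow mul 2 = ⊤ := by
    refine span_change _ a d _ _ hd ?_ ?_
    · convert mem_spair (zpow mul 2) a (d - c • a) 0 1 0 (zero_mem _) using 1
      module
    · convert mem_spair (zpow mul 2) a (d - c • a) 0 c 1 (zero_mem _) using 1
      module
  have haf : mul a (d - c • a) ∈ zpow mul 3 := by simpa using hc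
  generalize d - c • a = f at hs1 haf
  have G := gens hz m hfil a f haa hs1 (good hz m hfil a f haa hs1 haf).1
  have surj : ∀ d k, k + d = m + 2 → zpow mul (k+3) ≤ (zpow mul (k+2)).map (mul a) := by
    intro d
    induction d with
    | zero =>
      intro k hk
      have : k + 3 = m + 5 := by omega
      rw [this, h0]; exact bot_le
    | succ d ih =>
      intro k hk
      refine (G (k+1)).trans (sup_le ?_ ?_)
      · rw [Submodule.span_singleton_le_iff_mem]
        exact ⟨pq mul a (k+1), pq_mem a (k+1), rfl⟩
      · exact (ih (k+1) (by omega)).trans (Submodule.map_mono (zp_anti1 (k+1)))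
  have ker : ∀ x ∈ zpow mul 2, mul a x = 0 → ∃ c : ℂ, x = c • pq mul a (m+3) := by
    intro x hx hax
    have h : ∀ k, k ≤ m + 2 → x ∈ zpow mul (k+2) := by
      intro k
      induction k with
      | zero => intro _; exact hx
      | succ k ih =>
        intro hk
        obtain ⟨p, hp, y, hy, e⟩ := Submodule.mem_sup.1 (G k (ih (by omega)))
        obtain ⟨r, rfl⟩ := Submodule.mem_span_singleton.1 hp
        have h1 : r • pq mul a (k+2) ∈ zpow mul (k+4) := by
          rw [← e, map_add, map_smul] at hax
          rw [show pq mul a (k+2) = mul a (pq mul a (k+1)) from rfl, eq_neg_of_add_eq_zero_left hax]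
          exact neg_mem (zp_mul1 (k+2) _ _ hy)
        by_cases hr : r = 0
        · rw [← e, hr, zero_smul, zero_add]; exact hy
        · exfalso
          refine not_le_of m hfil (k+3) (by omega) (by omega) ?_
          refine (G (k+1)).trans (sup_le ?_ le_rfl)
          rw [Submodule.span_singleton_le_iff_mem]
          exact (Submodule.smul_mem_iff _ hr).1 h1
    have h2 := G (m+2) (h (m+2) le_rfl)
    rw [show m+2+3 = m+5 by ring, h0, sup_bot_eq] at h2
    obtain ⟨c, hc⟩ := Submodule.mem_span_singleton.1 h2
    exact ⟨c, hc.symm⟩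
  obtain ⟨w, hw, hwe⟩ := surj (m+2) 0 (by omega) haf
  have hs2 : Submodule.span ℂ {a, f - w} ⊔ zpow mul 2 = ⊤ := by
    refine span_change _ a f _ _ hs1 ?_ ?_
    · convert mem_spair (zpow mul 2) a (f - w) 0 1 0 (zero_mem _) using 1
      module
    · convert mem_spair (zpow mul 2) a (f - w) w 0 1 hw using 1
      module
  have haf2 : mul a (f - w) = 0 := by rw [map_sub, hwe, sub_self]
  generalize f - w = g at hs2 haf2
  have e1 : mul a (mul g a) = 0 := by
    have := hz a g a
    rw [haf2] at this
    simpa using this.symm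
  have e2 : mul a (mul g g) = 0 := by
    have := hz a g g
    rw [haf2, LinearMap.map_zero₂] at this
    have h2 := half_mem (⊥ : Submodule ℂ A) (mul a (mul g g)) (by rw [← this]; simp)
    simpa using h2
  obtain ⟨α, hα⟩ := ker _ (m2 g a) e1
  obtain ⟨β, hβ⟩ := ker _ (m2 g g) e2
  exact nf_final hz m h0 hdim a g α β hs2 haf2 hα hβ

end S

/-- For `n ≥ 5`, every `n`-dimensional complex filiform Zinbiel algebra
is isomorphic to `F_n^1`, `F_n^2` or `F_n^3`. -/
theorem filiform_classification (n : ℕ) (hn : 5 ≤ n)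
    (A : Type*) [AddCommGroup A] [Module ℂ A] [FiniteDimensional ℂ A]
    (mul : A →ₗ[ℂ] A →ₗ[ℂ] A) (hzin : IsZinbiel mul)
    (hdim : Module.finrank ℂ A = n)
    (hfil : ∀ i : ℕ, 2 ≤ i → i ≤ n → Module.finrank ℂ (zpow mul i) = n - i) :
    Isom mul (mulOf n (F1c n)) ∨ Isom mul (mulOf n (F2c n)) ∨
      Isom mul (mulOf n (F3c n)) := by
  obtain ⟨m, rfl⟩ := Nat.exists_eq_add_of_le' hn
  exact main5 hzin m hdim hfil
end

section
/- If A is a four-dimensional complex Zinbiel algebra, then the triple (dim A², dim A³, dim A⁴) is one of (3, 2, 1), (2, 1, 0), (2, 0, 0), (1, 0, 0), (0, 0, 0). -/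
open Polynomial in
lemma zaux_aeval_mem {A : Type*} [AddCommGroup A] [Module ℂ A]
    (P : Submodule ℂ (Module.End ℂ A)) (hmul : ∀ f ∈ P, ∀ g ∈ P, f * g ∈ P)
    (x : Module.End ℂ A) (hx : x ∈ P) (p : ℂ[X]) : aeval x (p * X) ∈ P := by
  have hpow : ∀ n : ℕ, x ^ (n + 1) ∈ P := by
    intro n
    induction n with
    | zero => simpa using hx
    | succ n ih => rw [pow_succ]; exact hmul _ ih _ hx
  induction p using Polynomial.induction_on' with
  | add p q hp hq => rw [add_mul, map_add]; exact P.add_mem hp hq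
  | monomial n a =>
    have : aeval x (monomial n a * X) = a • x ^ (n + 1) := by
      rw [monomial_mul_X, aeval_monomial, Algebra.smul_def]
    rw [this]
    exact P.smul_mem _ (hpow n)

open Polynomial in
lemma zaux_nil {A : Type*} [AddCommGroup A] [Module ℂ A] [FiniteDimensional ℂ A]
    (P : Submodule ℂ (Module.End ℂ A)) (hmul : ∀ f ∈ P, ∀ g ∈ P, f * g ∈ P)
    (htr : ∀ f ∈ P, LinearMap.trace ℂ A f = 0)
    (x : Module.End ℂ A) (hx : x ∈ P) : IsNilpotent x := by
  have hne : minpoly ℂ x ≠ 0 := minpoly.ne_zero (Algebra.IsIntegral.isIntegral x)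
  obtain ⟨q, hq, hqd⟩ := exists_eq_pow_rootMultiplicity_mul_and_not_dvd (minpoly ℂ x) hne 0
  generalize rootMultiplicity 0 (minpoly ℂ x) = m at hq
  rw [C_0, sub_zero] at hq hqd
  have hcop : IsCoprime (X ^ (m + 1)) q :=
    ((irreducible_X.coprime_iff_not_dvd).2 hqd).pow_left
  have hz : aeval x (X ^ (m + 1) * q) = 0 := by
    have : (X ^ (m + 1) * q : ℂ[X]) = X * minpoly ℂ x := by rw [hq]; ring
    rw [this, map_mul, minpoly.aeval, mul_zero]
  obtain ⟨u, v, huv⟩ := hcop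
  have hid : IsIdempotentElem (aeval x (u * X ^ (m + 1))) := by
    unfold IsIdempotentElem
    rw [← map_mul, ← sub_eq_zero, ← map_sub]
    have : u * X ^ (m + 1) * (u * X ^ (m + 1)) - u * X ^ (m + 1)
        = - (u * v) * (X ^ (m + 1) * q) := by
      linear_combination (u * X ^ (m + 1)) * huv
    rw [this, map_mul, hz, mul_zero]
  have hmem : aeval x (u * X ^ (m + 1)) ∈ P := by
    rw [pow_succ, ← mul_assoc]; exact zaux_aeval_mem P hmul x hx _
  have h0 : aeval x (u * X ^ (m + 1)) = 0 :=
    (LinearMap.IsIdempotentElem.trace_eq_zero_iff hid).1 (htr _ hmem)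
  refine ⟨m + 1, ?_⟩
  have : (X ^ (m + 1) : ℂ[X]) = X ^ (m + 1) * (u * X ^ (m + 1)) + v * (X ^ (m + 1) * q) := by
    linear_combination -(X ^ (m + 1)) * huv
  have h1 : aeval x (X ^ (m + 1) : ℂ[X]) = 0 := by
    rw [this, map_add, map_mul _ (X ^ (m + 1)) (u * X ^ (m + 1)), map_mul _ v, h0, hz]; simp
  simpa using h1

/-- span of products of two left multiplications -/
def zauxP {A : Type*} [AddCommGroup A] [Module ℂ A]
    (mul : A →ₗ[ℂ] A →ₗ[ℂ] A) : Submodule ℂ (Module.End ℂ A) :=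
  Submodule.span ℂ {f | ∃ a b : A, f = (mul a : Module.End ℂ A) * mul b}

section
variable {A : Type*} [AddCommGroup A] [Module ℂ A]
  (mul : A →ₗ[ℂ] A →ₗ[ℂ] A)

lemma zauxP_mul (hzin : IsZinbiel mul) :
    ∀ f ∈ zauxP mul, ∀ g ∈ zauxP mul, f * g ∈ zauxP mul := by
  have key : ∀ a b c : A, ((mul a : Module.End ℂ A) * mul b) * mul c
      = (mul (mul a b) : Module.End ℂ A) * mul c - (mul a : Module.End ℂ A) * mul (mul c b) := by
    intro a b c
    ext z
    have h1 := hzin a b (mul c z)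
    have h2 := hzin c z b
    have h3 := hzin c b z
    have h4 : mul (mul c z) b = mul (mul c b) z := by rw [h2, h3, add_comm]
    simp only [Module.End.mul_apply, LinearMap.sub_apply]
    rw [h1, h4]; abel
  have gen : ∀ a b : A, (mul a : Module.End ℂ A) * mul b ∈ zauxP mul :=
    fun a b => Submodule.subset_span ⟨a, b, rfl⟩
  have r1 : ∀ f ∈ zauxP mul, ∀ c : A, f * (mul c : Module.End ℂ A) ∈ zauxP mul := by
    intro f hf c
    induction hf using Submodule.span_induction with
    | mem f hf =>
      obtain ⟨a, b, rfl⟩ := hf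
      rw [key]
      exact Submodule.sub_mem _ (gen _ _) (gen _ _)
    | zero => rw [zero_mul]; exact Submodule.zero_mem _
    | add f g _ _ hf hg => rw [add_mul]; exact Submodule.add_mem _ hf hg
    | smul t f _ hf => rw [smul_mul_assoc]; exact Submodule.smul_mem _ _ hf
  intro f hf g hg
  induction hg using Submodule.span_induction with
  | mem g hg =>
    obtain ⟨a, b, rfl⟩ := hg
    rw [← mul_assoc]
    exact r1 _ (r1 _ hf _) _
  | zero => rw [mul_zero]; exact Submodule.zero_mem _
  | add f g _ _ hf hg => rw [mul_add]; exact Submodule.add_mem _ hf hg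
  | smul t f _ hf => rw [mul_smul_comm]; exact Submodule.smul_mem _ _ hf

lemma zauxP_trace (hzin : IsZinbiel mul) :
    ∀ f ∈ zauxP mul, LinearMap.trace ℂ A f = 0 := by
  intro f hf
  induction hf using Submodule.span_induction with
  | mem f hf =>
    obtain ⟨a, b, rfl⟩ := hf
    have h1 : (mul a : Module.End ℂ A) * mul b
        = (mul.flip b : Module.End ℂ A) * mul a - (mul a : Module.End ℂ A) * mul.flip b := by
      ext z
      simp only [Module.End.mul_apply, LinearMap.sub_apply, LinearMap.flip_apply]
      rw [hzin a z b]; abel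
    rw [h1, map_sub, LinearMap.trace_mul_comm, sub_self]
  | zero => simp
  | add f g _ _ hf hg => rw [map_add, hf, hg, add_zero]
  | smul t f _ hf => rw [map_smul, hf, smul_zero]

attribute [local instance 100] LieRing.ofAssociativeRing

/-- the Lie algebra attached to `zauxP` -/
def zauxL (hzin : IsZinbiel mul) : LieSubalgebra ℂ (Module.End ℂ A) where
  __ := zauxP mul
  lie_mem' := by
    intro f g hf hg
    rw [Ring.lie_def]
    exact (zauxP mul).sub_mem (zauxP_mul mul hzin _ hf _ hg) (zauxP_mul mul hzin _ hg _ hf)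

lemma zaux_bot [FiniteDimensional ℂ A] (hzin : IsZinbiel mul) (B : Submodule ℂ A)
    (hB : B ≤ Submodule.span ℂ {z | ∃ a : A, ∃ b ∈ B, z = mul a b}) : B = ⊥ := by
  have hnil : LieModule.IsNilpotent (zauxL mul hzin) A := by
    rw [LieModule.isNilpotent_iff_forall' (R := ℂ)]
    rintro ⟨x, hx⟩
    have := zaux_nil (zauxP mul) (zauxP_mul mul hzin) (zauxP_trace mul hzin) x hx
    exact this
  obtain ⟨k, hk⟩ := (LieModule.isNilpotent_iff ℂ (zauxL mul hzin) A).1 hnil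
  have step : ∀ k, B ≤ (LieModule.lowerCentralSeries ℂ (zauxL mul hzin) A k).toSubmodule := by
    intro k
    induction k with
    | zero => simp
    | succ k ih =>
      rw [LieModule.lowerCentralSeries_succ]
      set N := LieModule.lowerCentralSeries ℂ (zauxL mul hzin) A k
      have hin : ∀ a c : A, ∀ d ∈ B, mul a (mul c d) ∈
          (⁅(⊤ : LieIdeal ℂ (zauxL mul hzin)), N⁆ : LieSubmodule ℂ (zauxL mul hzin) A).toSubmodule := by
        intro a c d hd
        have hm : (mul a : Module.End ℂ A) * mul c ∈ zauxL mul hzin :=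
          Submodule.subset_span ⟨a, c, rfl⟩
        exact LieSubmodule.lie_mem_lie (I := (⊤ : LieIdeal ℂ (zauxL mul hzin))) (N := N)
          (x := ⟨_, hm⟩) (m := d) (LieSubmodule.mem_top _) (ih hd)
      refine hB.trans (Submodule.span_le.2 ?_)
      rintro z ⟨a, b, hb, rfl⟩
      have hle := hB.trans (Submodule.span_le (p := Submodule.comap (mul a)
        (⁅(⊤ : LieIdeal ℂ (zauxL mul hzin)), N⁆ :
          LieSubmodule ℂ (zauxL mul hzin) A).toSubmodule).2 (by
            rintro _ ⟨c, d, hd, rfl⟩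
            exact hin a c d hd))
      exact hle hb
  have := step k
  rw [hk] at this
  simpa using this

lemma zpow_succ_eq (k : ℕ) : zpow mul (k + 2) =
    Submodule.span ℂ {z | ∃ a : A, ∃ b ∈ zpow mul (k+1), z = mul a b} := by
  rw [zpow]

lemma zmul_mem (k : ℕ) (a b : A) (hb : b ∈ zpow mul (k + 1)) : mul a b ∈ zpow mul (k + 2) := by
  rw [zpow_succ_eq]; exact Submodule.subset_span ⟨a, b, hb, rfl⟩

lemma zpow_anti (k : ℕ) : zpow mul (k + 2) ≤ zpow mul (k + 1) := by
  induction k with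
  | zero => simp [zpow]
  | succ k ih =>
    rw [zpow_succ_eq mul (k + 1)]
    refine Submodule.span_le.2 ?_
    rintro z ⟨a, b, hb, rfl⟩
    exact zmul_mem mul k a b (ih hb)

lemma zmul_mem_right (hzin : IsZinbiel mul) (k : ℕ) :
    ∀ a b : A, b ∈ zpow mul (k + 1) → mul b a ∈ zpow mul (k + 2) := by
  induction k with
  | zero => intro a b _; exact zmul_mem mul 0 b a (by simp [zpow])
  | succ k ih =>
    intro a b hb
    rw [zpow_succ_eq] at hb
    induction hb using Submodule.span_induction with
    | mem x hx =>
      obtain ⟨c, d, hd, rfl⟩ := hx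
      rw [hzin, ← map_add]
      exact zmul_mem mul (k + 1) _ _ (Submodule.add_mem _ (ih _ _ hd) (zmul_mem mul k _ _ hd))
    | zero => simp
    | add x y _ _ hx hy => rw [map_add]; exact Submodule.add_mem _ hx hy
    | smul t x _ hx => rw [map_smul]; exact Submodule.smul_mem _ _ hx

lemma zmul_sq (hzin : IsZinbiel mul) (k : ℕ) (a b : A) (ha : a ∈ zpow mul 2)
    (hb : b ∈ zpow mul (k + 1)) : mul a b ∈ zpow mul (k + 3) := by
  rw [zpow_succ_eq mul 0] at ha
  induction ha using Submodule.span_induction with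
  | mem x hx =>
    obtain ⟨c, d, hd, rfl⟩ := hx
    rw [hzin, ← map_add]
    exact zmul_mem mul (k + 1) _ _ (Submodule.add_mem _ (zmul_mem mul k _ _ hb)
      (zmul_mem_right mul hzin k _ _ hb))
  | zero => simp
  | add x y _ _ hx hy => rw [map_add]; exact Submodule.add_mem _ hx hy
  | smul t x _ hx => rw [map_smul]; exact Submodule.smul_mem _ _ hx

lemma zpow_gen (hzin : IsZinbiel mul) (x : A) (hx : (⊤ : Submodule ℂ A) ≤ (ℂ ∙ x) ⊔ zpow mul 2)
    (k : ℕ) : ∃ y, zpow mul (k + 1) ≤ (ℂ ∙ y) ⊔ zpow mul (k + 2) := by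
  induction k with
  | zero => exact ⟨x, by simpa [zpow] using hx⟩
  | succ k ih =>
    obtain ⟨y, hy⟩ := ih
    refine ⟨mul x y, ?_⟩
    rw [zpow_succ_eq mul k]
    refine Submodule.span_le.2 ?_
    rintro z ⟨a, b, hb, rfl⟩
    obtain ⟨_, h1, a', ha', rfl⟩ := Submodule.mem_sup.1 (hx (Submodule.mem_top (x := a)))
    obtain ⟨s, rfl⟩ := Submodule.mem_span_singleton.1 h1
    obtain ⟨_, h2, b', hb', e⟩ := Submodule.mem_sup.1 (hy hb)
    obtain ⟨t, rfl⟩ := Submodule.mem_span_singleton.1 h2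
    have : mul (s • x + a') b = (s * t) • mul x y + (s • mul x b' + mul a' b) := by
      rw [map_add, LinearMap.add_apply, map_smul, LinearMap.smul_apply]
      conv_lhs => rw [← e]
      rw [map_add, map_smul, smul_add, mul_smul, add_assoc, e]
    rw [this]
    refine Submodule.add_mem_sup (Submodule.smul_mem _ _ (Submodule.mem_span_singleton_self _))
      (Submodule.add_mem _ (Submodule.smul_mem _ _ (zmul_mem mul (k + 1) _ _ hb'))
        (zmul_sq mul hzin k _ _ ha' hb))

lemma zpow_lt [FiniteDimensional ℂ A] (hzin : IsZinbiel mul) (k : ℕ) :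
    Module.finrank ℂ (zpow mul (k + 1)) = 0 ∨
      Module.finrank ℂ (zpow mul (k + 2)) < Module.finrank ℂ (zpow mul (k + 1)) := by
  rcases (zpow_anti mul k).lt_or_eq with h | h
  · exact Or.inr (Submodule.finrank_lt_finrank_of_lt h)
  · left
    have : zpow mul (k + 1) = ⊥ := by
      apply zaux_bot mul hzin
      rw [← zpow_succ_eq, h]
    rw [this]; simp

lemma zpow_gen_le [FiniteDimensional ℂ A] (hzin : IsZinbiel mul)
    (h : Module.finrank ℂ A = Module.finrank ℂ (zpow mul 2) + 1) (k : ℕ) :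
    Module.finrank ℂ (zpow mul (k + 1)) ≤ Module.finrank ℂ (zpow mul (k + 2)) + 1 := by
  have hx : ∃ x, x ∉ zpow mul 2 := by
    by_contra! hc
    have : zpow mul 2 = ⊤ := by ext; simp [hc]
    rw [this, finrank_top] at h
    omega
  obtain ⟨x, hx⟩ := hx
  have hlt : zpow mul 2 < (ℂ ∙ x) ⊔ zpow mul 2 := by
    refine lt_of_le_of_ne le_sup_right fun e => hx ?_
    rw [e]; exact Submodule.mem_sup_left (Submodule.mem_span_singleton_self _)
  have h1 := Submodule.finrank_lt_finrank_of_lt hlt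
  have h2 := Submodule.finrank_le ((ℂ ∙ x) ⊔ zpow mul 2)
  have htop : (ℂ ∙ x) ⊔ zpow mul 2 = ⊤ := Submodule.eq_top_of_finrank_eq (by omega)
  obtain ⟨y, hy⟩ := zpow_gen mul hzin x htop.ge k
  have h3 := Submodule.finrank_mono hy
  have h4 := Submodule.finrank_add_le_finrank_add_finrank (ℂ ∙ y) (zpow mul (k + 2))
  have h5 : Module.finrank ℂ (ℂ ∙ y) ≤ 1 := by
    simpa using finrank_span_le_card (R := ℂ) ({y} : Set A)
  omega

end

/-- For a 4-dimensional complex Zinbiel algebra the triple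
`(dim A², dim A³, dim A⁴)` is one of `(3,2,1), (2,1,0), (2,0,0), (1,0,0), (0,0,0)`. -/
theorem dim4_possible_dims (A : Type*) [AddCommGroup A] [Module ℂ A]
    [FiniteDimensional ℂ A]
    (mul : A →ₗ[ℂ] A →ₗ[ℂ] A) (hzin : IsZinbiel mul)
    (hdim : Module.finrank ℂ A = 4) :
    (Module.finrank ℂ (zpow mul 2), Module.finrank ℂ (zpow mul 3),
        Module.finrank ℂ (zpow mul 4)) = (3, 2, 1) ∨
    (Module.finrank ℂ (zpow mul 2), Module.finrank ℂ (zpow mul 3),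
        Module.finrank ℂ (zpow mul 4)) = (2, 1, 0) ∨
    (Module.finrank ℂ (zpow mul 2), Module.finrank ℂ (zpow mul 3),
        Module.finrank ℂ (zpow mul 4)) = (2, 0, 0) ∨
    (Module.finrank ℂ (zpow mul 2), Module.finrank ℂ (zpow mul 3),
        Module.finrank ℂ (zpow mul 4)) = (1, 0, 0) ∨
    (Module.finrank ℂ (zpow mul 2), Module.finrank ℂ (zpow mul 3),
        Module.finrank ℂ (zpow mul 4)) = (0, 0, 0) := by
  have e1 : Module.finrank ℂ (zpow mul 1) = 4 := by rw [zpow, finrank_top, hdim]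
  have a1 : Module.finrank ℂ (zpow mul 1) = 0 ∨ Module.finrank ℂ (zpow mul 2) < Module.finrank ℂ (zpow mul 1) := zpow_lt mul hzin 0
  have a2 : Module.finrank ℂ (zpow mul 2) = 0 ∨ Module.finrank ℂ (zpow mul 3) < Module.finrank ℂ (zpow mul 2) := zpow_lt mul hzin 1
  have a3 : Module.finrank ℂ (zpow mul 3) = 0 ∨ Module.finrank ℂ (zpow mul 4) < Module.finrank ℂ (zpow mul 3) := zpow_lt mul hzin 2
  have m2 : Module.finrank ℂ (zpow mul 3) ≤ Module.finrank ℂ (zpow mul 2) := Submodule.finrank_mono (zpow_anti mul 1)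
  have m3 : Module.finrank ℂ (zpow mul 4) ≤ Module.finrank ℂ (zpow mul 3) := Submodule.finrank_mono (zpow_anti mul 2)
  have g2 : Module.finrank ℂ A = Module.finrank ℂ (zpow mul 2) + 1 → Module.finrank ℂ (zpow mul 2) ≤ Module.finrank ℂ (zpow mul 3) + 1 :=
    fun h => zpow_gen_le mul hzin h 1
  have g3 : Module.finrank ℂ A = Module.finrank ℂ (zpow mul 2) + 1 → Module.finrank ℂ (zpow mul 3) ≤ Module.finrank ℂ (zpow mul 4) + 1 :=
    fun h => zpow_gen_le mul hzin h 2
  rw [e1] at a1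
  rw [hdim] at g2 g3
  simp only [Prod.mk.injEq]
  by_cases h : 4 = Module.finrank ℂ (zpow mul 2) + 1
  · have := g2 h
    have := g3 h
    omega
  · omega
end
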